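/- Let G be a finite simple graph of order n having no isolated vertices (vertices of degree 0) and no dominant vertices (vertices of degree n−1). Then G satisfies (k,1)-adjacency anonymity with k = min{δ(G), n − Δ(G) − 1}, where δ(G) and Δ(G) denote the minimum and maximum degree of G. -/

import Mathlib

open Finset

variable {V : Type*}

/-- The adjacency function: 0 if equal, 1 if adjacent, 2 otherwise. -/
def adjFn [DecidableEq V] (G : SimpleGraph V) [DecidableRel G.Adj] (u v : V) : ℕ :=
  if u = v then 0 else if G.Adj u v then 1 else 2

/-- The equivalence class of `x` outside `S` under equality of adjacency
representations with respect to `S`. -/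
def adjClass [DecidableEq V] (G : SimpleGraph V) [DecidableRel G.Adj] (S : Set V) (x : V) :
    Set V :=
  {y | y ∉ S ∧ ∀ s ∈ S, adjFn G s x = adjFn G s y}

/-- `S` is a `k`-adjacency antiresolving set of `G`: `S` is a proper nonempty subset of the
vertex set and `k` is the minimum cardinality of an equivalence class of the relation
"having equal adjacency representation with respect to `S`" on the complement of `S`. -/
def IsAdjAntiresolvingSet [DecidableEq V] (G : SimpleGraph V) [DecidableRel G.Adj]
    (S : Set V) (k : ℕ) : Prop :=
  S.Nonempty ∧ S ≠ Set.univ ∧ 0 < k ∧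
    (∀ x ∉ S, k ≤ (adjClass G S x).ncard) ∧
    (∃ x ∉ S, (adjClass G S x).ncard = k)

/-- `G` satisfies `(k,ℓ)`-adjacency anonymity: `k` is the smallest positive integer such that
the `k`-adjacency antidimension of `G` (minimum cardinality of a `k`-adjacency antiresolving
set) is at most `ℓ`. -/
def AdjAnonymous [DecidableEq V] (G : SimpleGraph V) [DecidableRel G.Adj] (k ℓ : ℕ) : Prop :=
  0 < k ∧ (∃ S : Set V, IsAdjAntiresolvingSet G S k ∧ S.ncard ≤ ℓ) ∧
    ∀ k' : ℕ, 0 < k' → (∃ S : Set V, IsAdjAntiresolvingSet G S k' ∧ S.ncard ≤ ℓ) → k ≤ k'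

/-!
If `v` is neither isolated nor dominant, the adjacency classes outside `{v}` are its neighbourhoods
in `G` and in `Gᶜ`, so `{v}` is `k`-adjacency antiresolving exactly for the smaller of the degrees
of `v` in `G` and in `Gᶜ`. The least value of this minimum over all `v` is the minimum of `δ(G)` and
`δ(Gᶜ) = n - Δ(G) - 1`.
-/

section AdjClass

variable [DecidableEq V] (G : SimpleGraph V) [DecidableRel G.Adj]

theorem adjFn_eq_adjFn_iff {u x y : V} (hx : u ≠ x) (hy : u ≠ y) :
    adjFn G u x = adjFn G u y ↔ (G.Adj u x ↔ G.Adj u y) := by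
  by_cases hux : G.Adj u x <;> by_cases huy : G.Adj u y <;> simp [adjFn, hx, hy, hux, huy]

theorem adjClass_compl {S : Set V} {x : V} (hx : x ∉ S) : adjClass Gᶜ S x = adjClass G S x := by
  ext y
  refine and_congr_right fun hy => forall₂_congr fun s hs => ?_
  have hsx : s ≠ x := ne_of_mem_of_not_mem hs hx
  have hsy : s ≠ y := ne_of_mem_of_not_mem hs hy
  rw [adjFn_eq_adjFn_iff Gᶜ hsx hsy, adjFn_eq_adjFn_iff G hsx hsy, G.compl_adj, G.compl_adj,
    and_iff_right hsx, and_iff_right hsy, not_iff_not]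

variable {G} {v x : V}

theorem adjClass_singleton_of_adj (h : G.Adj v x) : adjClass G {v} x = G.neighborSet v := by
  ext y
  rcases eq_or_ne v y with rfl | hy
  · simp [adjClass]
  · simp [adjClass, adjFn_eq_adjFn_iff G h.ne hy, h, hy.symm]

theorem adjClass_singleton_of_compl_adj (h : Gᶜ.Adj v x) :
    adjClass G {v} x = Gᶜ.neighborSet v := by
  have hx : x ∉ ({v} : Set V) := h.ne'
  rw [← adjClass_compl G hx, adjClass_singleton_of_adj h]

end AdjClass

theorem ncard_neighborSet (G : SimpleGraph V) (v : V) [Fintype (G.neighborSet v)] :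
    (G.neighborSet v).ncard = G.degree v := by
  rw [Set.ncard_eq_toFinset_card', Set.toFinset_card, G.card_neighborSet_eq_degree]

theorem minDegree_compl [Fintype V] [DecidableEq V] [Nonempty V] (G : SimpleGraph V)
    [DecidableRel G.Adj] : Gᶜ.minDegree = Fintype.card V - G.maxDegree - 1 := by
  obtain ⟨a, ha⟩ := Gᶜ.exists_minimal_degree_vertex
  obtain ⟨b, hb⟩ := G.exists_maximal_degree_vertex
  have hab : Gᶜ.degree a ≤ Gᶜ.degree b := ha ▸ Gᶜ.minDegree_le_degree b
  have hba : G.degree a ≤ G.degree b := hb ▸ G.degree_le_maxDegree a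
  rw [ha, hb]
  simp only [G.degree_compl] at hab ⊢
  omega

theorem isLeast_range_degree [Fintype V] [Nonempty V] (G : SimpleGraph V) [DecidableRel G.Adj] :
    IsLeast (Set.range fun v => G.degree v) G.minDegree :=
  ⟨G.exists_minimal_degree_vertex.imp fun _ => Eq.symm,
    Set.forall_mem_range.2 G.minDegree_le_degree⟩

theorem isLeast_range_min {ι α : Type*} [LinearOrder α] {f g : ι → α} {a b : α}
    (hf : IsLeast (Set.range f) a) (hg : IsLeast (Set.range g) b) :
    IsLeast (Set.range fun i => min (f i) (g i)) (min a b) := by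
  obtain ⟨⟨i, rfl⟩, hi⟩ := hf
  obtain ⟨⟨j, rfl⟩, hj⟩ := hg
  have hle : ∀ l, min (f i) (g j) ≤ min (f l) (g l) := fun l =>
    min_le_min (hi ⟨l, rfl⟩) (hj ⟨l, rfl⟩)
  refine ⟨?_, Set.forall_mem_range.2 hle⟩
  rcases le_total (f i) (g j) with h | h
  · exact ⟨i, le_antisymm ((min_le_left _ _).trans_eq (min_eq_left h).symm) (hle i)⟩
  · exact ⟨j, le_antisymm ((min_le_right _ _).trans_eq (min_eq_right h).symm) (hle j)⟩

section Antiresolving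

variable [DecidableEq V] {G : SimpleGraph V} [DecidableRel G.Adj]

theorem isAdjAntiresolvingSet_iff_isLeast [Finite V] {S : Set V} {k : ℕ} :
    IsAdjAntiresolvingSet G S k ↔
      S.Nonempty ∧ IsLeast ((fun x => (adjClass G S x).ncard) '' Sᶜ) k := by
  constructor
  · rintro ⟨hS, -, -, hle, hk⟩
    exact ⟨hS, hk, Set.forall_mem_image.2 hle⟩
  · rintro ⟨hS, ⟨x, hx, rfl⟩, hle⟩
    have hxx : x ∈ adjClass G S x := ⟨hx, fun _ _ => rfl⟩
    exact ⟨hS, fun hu => hx (hu ▸ Set.mem_univ x), (Set.ncard_pos).2 ⟨x, hxx⟩,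
      Set.forall_mem_image.1 hle, x, hx, rfl⟩

theorem image_ncard_adjClass_singleton [Fintype V] {v : V} (hv : G.degree v ≠ 0)
    (hv' : Gᶜ.degree v ≠ 0) :
    (fun x => (adjClass G {v} x).ncard) '' {v}ᶜ = {G.degree v, Gᶜ.degree v} := by
  have of_adj {x : V} (h : G.Adj v x) : (adjClass G {v} x).ncard = G.degree v := by
    rw [adjClass_singleton_of_adj h, ncard_neighborSet]
  have of_compl_adj {x : V} (h : Gᶜ.Adj v x) : (adjClass G {v} x).ncard = Gᶜ.degree v := by
    rw [adjClass_singleton_of_compl_adj h, ncard_neighborSet]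
  apply Set.Subset.antisymm
  · rintro _ ⟨x, hx, rfl⟩
    by_cases h : G.Adj v x
    · exact Or.inl (of_adj h)
    · exact Or.inr (of_compl_adj ((G.compl_adj v x).2 ⟨Ne.symm hx, h⟩))
  · obtain ⟨x, hx⟩ := (G.degree_pos_iff_exists_adj v).1 (Nat.pos_of_ne_zero hv)
    obtain ⟨y, hy⟩ := (Gᶜ.degree_pos_iff_exists_adj v).1 (Nat.pos_of_ne_zero hv')
    exact Set.pair_subset ⟨x, hx.ne', of_adj hx⟩ ⟨y, hy.ne', of_compl_adj hy⟩

theorem isAdjAntiresolvingSet_singleton_iff [Fintype V] {v : V} {k : ℕ} (hv : G.degree v ≠ 0)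
    (hv' : Gᶜ.degree v ≠ 0) :
    IsAdjAntiresolvingSet G {v} k ↔ min (G.degree v) (Gᶜ.degree v) = k := by
  rw [isAdjAntiresolvingSet_iff_isLeast, image_ncard_adjClass_singleton hv hv',
    and_iff_right (Set.singleton_nonempty v), isLeast_pair.isLeast_iff_eq]

theorem exists_isAdjAntiresolvingSet_ncard_le_one_iff [Finite V] {k : ℕ} :
    (∃ S, IsAdjAntiresolvingSet G S k ∧ S.ncard ≤ 1) ↔ ∃ v, IsAdjAntiresolvingSet G {v} k := by
  constructor
  · rintro ⟨S, hS, hcard⟩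
    obtain ⟨v, rfl⟩ := Set.ncard_eq_one.1 (hcard.antisymm ((Set.ncard_pos).2 hS.1))
    exact ⟨v, hS⟩
  · rintro ⟨v, hv⟩
    exact ⟨{v}, hv, (Set.ncard_singleton v).le⟩

theorem adjAnonymous_iff_isLeast {k l : ℕ} :
    AdjAnonymous G k l ↔ IsLeast {j | ∃ S, IsAdjAntiresolvingSet G S j ∧ S.ncard ≤ l} k := by
  constructor
  · rintro ⟨-, hk, hle⟩
    exact ⟨hk, fun j ⟨S, hS, hcard⟩ => hle j hS.2.2.1 ⟨S, hS, hcard⟩⟩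
  · rintro ⟨⟨S, hS, hcard⟩, hle⟩
    exact ⟨hS.2.2.1, ⟨S, hS, hcard⟩, fun j _ hj => hle hj⟩

end Antiresolving

/-- a finite simple graph of order `n` with no isolated vertices and no dominant
vertices satisfies `(k,1)`-adjacency anonymity with `k = min {δ(G), n - Δ(G) - 1}`. -/
theorem stmt1 [Fintype V] [DecidableEq V] [Nonempty V] (G : SimpleGraph V) [DecidableRel G.Adj]
    (hiso : ∀ v : V, G.degree v ≠ 0)
    (hdom : ∀ v : V, G.degree v ≠ Fintype.card V - 1) :
    AdjAnonymous G (min G.minDegree (Fintype.card V - G.maxDegree - 1)) 1 := by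
  have hcodeg : ∀ v, Gᶜ.degree v ≠ 0 := fun v => by
    have hlt := G.degree_lt_card_verts v
    have hne := hdom v
    rw [G.degree_compl]
    omega
  have hset : {k | ∃ S, IsAdjAntiresolvingSet G S k ∧ S.ncard ≤ 1} =
      Set.range fun v => min (G.degree v) (Gᶜ.degree v) := by
    ext k
    simp only [Set.mem_ofPred_eq, exists_isAdjAntiresolvingSet_ncard_le_one_iff, Set.mem_range,
      isAdjAntiresolvingSet_singleton_iff (hiso _) (hcodeg _)]
  rw [adjAnonymous_iff_isLeast, hset, ← minDegree_compl]
  exact isLeast_range_min (isLeast_range_degree G) (isLeast_range_degree Gᶜ)
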